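/- Let G be a group, E a real Banach space, and f : G → E a function such that ‖f(xy) + f(xy⁻¹) − 2f(x)‖ ≤ c for all x, y ∈ G, where c > 0. Then for every integer m > 1, every natural number k ≥ 1, and every x ∈ G: ‖f(x^{m^k}) − m^k·f(x)‖ ≤ c_m·(1 + m + ⋯ + m^{k−1}), and consequently ‖(1/m^k)·f(x^{m^k}) − f(x)‖ ≤ c_m. -/

import Mathlib

/-!
The case `k = 1` carries the argument. Taking `y = x ^ (m - 1)` in the quasi-Jensen inequality
relates `f (x ^ m)` to `2 f(x) - f ((x ^ (m - 2))⁻¹)`, and `f` is odd up to the error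
`c + 2 ‖f 1‖` (take `x = 1`), so the error constant at `m` is that at `m - 2` plus
`c + (c + 2 ‖f 1‖)`: this is the recursion defining `C`, started from a zero error (not `C 1`) at
`m = 1` and, at `m = 2`, from the error `c + ‖f 1‖` given by `y = x`. The general `k` follows by
applying the case `k = 1` at the point `x ^ m ^ k`, which multiplies the previous error by `m` and
adds `C m`; the normalised bound holds because `1 + m + ⋯ + m ^ (k - 1) ≤ m ^ k`.
-/

open Finset

/-- A quasi-Jensen function is odd up to a bounded error. -/
theorem norm_add_inv_le {G : Type*} [Group G] {E : Type*} [NormedAddCommGroup E]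
    [NormedSpace ℝ E] {f : G → E} {c : ℝ}
    (hf : ∀ x y : G, ‖f (x * y) + f (x * y⁻¹) - (2 : ℝ) • f x‖ ≤ c) (y : G) :
    ‖f y + f y⁻¹‖ ≤ c + 2 * ‖f 1‖ := by
  have h := hf 1 y
  rw [one_mul, one_mul] at h
  calc ‖f y + f y⁻¹‖ = ‖(f y + f y⁻¹ - (2 : ℝ) • f 1) + (2 : ℝ) • f 1‖ := by
        rw [sub_add_cancel]
    _ ≤ c + 2 * ‖f 1‖ := by
        refine (norm_add_le _ _).trans (add_le_add h ?_)
        rw [norm_smul, Real.norm_ofNat]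

/-- The passage from exponent `n` to exponent `n + 2`. -/
theorem norm_pow_add_two_sub_le {G : Type*} [Group G] {E : Type*} [NormedAddCommGroup E]
    [NormedSpace ℝ E] {f : G → E} {c : ℝ}
    (hf : ∀ x y : G, ‖f (x * y) + f (x * y⁻¹) - (2 : ℝ) • f x‖ ≤ c) (x : G) (n : ℕ) :
    ‖f (x ^ (n + 2)) - ((n + 2 : ℕ) : ℝ) • f x‖ ≤
      c + (c + 2 * ‖f 1‖) + ‖f (x ^ n) - (n : ℝ) • f x‖ := by
  have h := hf x (x ^ (n + 1))
  have e1 : x * x ^ (n + 1) = x ^ (n + 2) := (pow_succ' x (n + 1)).symm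
  have e2 : x * (x ^ (n + 1))⁻¹ = (x ^ n)⁻¹ := by
    rw [pow_succ]; group
  rw [e1, e2] at h
  have e : f (x ^ (n + 2)) - ((n + 2 : ℕ) : ℝ) • f x =
      (f (x ^ (n + 2)) + f (x ^ n)⁻¹ - (2 : ℝ) • f x) - (f (x ^ n) + f (x ^ n)⁻¹)
        + (f (x ^ n) - (n : ℝ) • f x) := by
    push_cast
    module
  rw [e]
  exact (norm_add_le _ _).trans (add_le_add_left
    ((norm_sub_le _ _).trans (add_le_add h (norm_add_inv_le hf _))) _)

/-- Geometric sums of ratio at least `2` are dominated by the next power. -/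
theorem geom_sum_le_pow {m : ℝ} (hm : 2 ≤ m) (k : ℕ) : ∑ i ∈ range k, m ^ i ≤ m ^ k := by
  induction k with
  | zero => simp
  | succ k ih =>
    rw [sum_range_succ, pow_succ]
    have : 0 ≤ m ^ k := by positivity
    nlinarith

/-- Lemma 2.4 / `l-2`.  If `f : G → E` satisfies
`‖f(xy) + f(xy⁻¹) − 2f(x)‖ ≤ c` for all `x, y`, then for every integer `m > 1`,
every `k ≥ 1` and every `x`,
`‖f(x^{m^k}) − m^k·f(x)‖ ≤ c_m·(1 + m + ⋯ + m^{k−1})` and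
`‖(1/m^k)·f(x^{m^k}) − f(x)‖ ≤ c_m`. -/
theorem stmt1 {G : Type*} [Group G] {E : Type*} [NormedAddCommGroup E]
    [NormedSpace ℝ E] [CompleteSpace E] (f : G → E) (c : ℝ) (hc : 0 < c)
    (hf : ∀ x y : G, ‖f (x * y) + f (x * y⁻¹) - (2 : ℝ) • f x‖ ≤ c)
    (C : ℕ → ℝ)
    (hC1 : C 1 = c + 2 * ‖f 1‖)
    (hC2 : C 2 = c + ‖f 1‖)
    (hC3 : C 3 = c + C 1)
    (hCrec : ∀ m : ℕ, 3 < m → C m = c + C 1 + C (m - 2)) :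
    ∀ (m k : ℕ), 1 < m → 1 ≤ k → ∀ x : G,
      ‖f (x ^ m ^ k) - ((m : ℝ) ^ k) • f x‖ ≤ C m * ∑ i ∈ range k, (m : ℝ) ^ i ∧
      ‖(1 / (m : ℝ) ^ k) • f (x ^ m ^ k) - f x‖ ≤ C m := by
  -- `n` is shifted by two so that the recursion for `C` becomes ordinary two-step recursion.
  have base : ∀ (n : ℕ) (x : G), ‖f (x ^ (n + 2)) - ((n + 2 : ℕ) : ℝ) • f x‖ ≤ C (n + 2) := by
    intro n
    induction n using Nat.twoStepInduction with
    | zero =>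
      intro x
      -- The two-step inequality at `n = 0` would give the constant `2c + 3‖f 1‖`, too large for
      -- `C 2`; the choice `y = x` gives the sharper one.
      have h := hf x x
      rw [mul_inv_cancel, ← pow_two] at h
      have e : f (x ^ (0 + 2)) - ((0 + 2 : ℕ) : ℝ) • f x =
          (f (x ^ 2) + f 1 - (2 : ℝ) • f x) - f 1 := by
        push_cast
        abel
      rw [e, zero_add, hC2]
      exact (norm_sub_le _ _).trans (add_le_add_left h _)
    | one =>
      intro x
      have h := norm_pow_add_two_sub_le hf x 1
      have e : f (x ^ 1) - ((1 : ℕ) : ℝ) • f x = 0 := by simp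
      rw [e, norm_zero, add_zero] at h
      change _ ≤ C 3
      rw [hC3, hC1]
      exact h
    | more n ih _ =>
      intro x
      have h := norm_pow_add_two_sub_le hf x (n + 2)
      have hC := hCrec (n + 2 + 2) (by omega)
      rw [Nat.add_sub_cancel, hC1] at hC
      change _ ≤ C (n + 2 + 2)
      rw [hC]
      exact h.trans (add_le_add_right (ih x) _)
  intro m k hm _ x
  replace base : ∀ x : G, ‖f (x ^ m) - (m : ℝ) • f x‖ ≤ C m := by
    obtain ⟨n, rfl⟩ := Nat.exists_eq_add_of_le' hm
    exact base n
  have hm2 : (2 : ℝ) ≤ m := by exact_mod_cast hm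
  have hCm : 0 ≤ C m := (norm_nonneg _).trans (base 1)
  have main : ‖f (x ^ m ^ k) - ((m : ℝ) ^ k) • f x‖ ≤ C m * ∑ i ∈ range k, (m : ℝ) ^ i := by
    clear * - base
    induction k with
    | zero => simp
    | succ k ih =>
      have e : f (x ^ m ^ (k + 1)) - ((m : ℝ) ^ (k + 1)) • f x =
          (f ((x ^ m ^ k) ^ m) - (m : ℝ) • f (x ^ m ^ k)) +
            (m : ℝ) • (f (x ^ m ^ k) - ((m : ℝ) ^ k) • f x) := by
        rw [← pow_mul, ← pow_succ]
        module
      rw [e, geom_sum_succ]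
      refine (norm_add_le _ _).trans ?_
      rw [norm_smul, Real.norm_natCast]
      have := mul_le_mul_of_nonneg_left ih (Nat.cast_nonneg (α := ℝ) m)
      linarith [base (x ^ m ^ k)]
  refine ⟨main, ?_⟩
  have hpos : (0 : ℝ) < (m : ℝ) ^ k := by positivity
  have e : (1 / (m : ℝ) ^ k) • f (x ^ m ^ k) - f x =
      (1 / (m : ℝ) ^ k) • (f (x ^ m ^ k) - ((m : ℝ) ^ k) • f x) := by
    rw [smul_sub, smul_smul, one_div_mul_cancel hpos.ne', one_smul]
  rw [e, norm_smul, Real.norm_of_nonneg (by positivity), one_div_mul_eq_div, div_le_iff₀ hpos]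
  exact main.trans (mul_le_mul_of_nonneg_left (geom_sum_le_pow hm2 k) hCm)
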